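/- arXiv:2012.13511 — 9 statements merged into one kernel-verified Lean document; each statement's English description precedes it below -/
import Mathlib

section
/- Let 0 < r < 1 and let φ_car(z) = 1 + z + z²/2. Then the minimum of Re(φ_car(z)) over the circle |z| = r equals 1 − r + r²/2 when 0 < r ≤ 1/2 and equals (3 − 2r²)/4 when 1/2 ≤ r < 1, while the maximum of Re(φ_car(z)) over |z| = r equals 1 + r + r²/2. -/
open Complex Metric

/-!
On the circle `‖z‖ = r` we have `Re (z ^ 2) = 2 * (Re z) ^ 2 - r ^ 2`, so the real part of a
quadratic polynomial with real coefficients is a real quadratic function of `x = Re z`, and `x`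
runs over `[-r, r]`. For `1 + z + z ^ 2 / 2` this function is `1 - r ^ 2 / 2 + x + x ^ 2`: its
vertex `-1 / 2` lies in `[-r, r]` exactly when `1 / 2 ≤ r`, which separates the two minimum regimes.
-/

section RealQuadratic

variable {a b c l u : ℝ} {s : Set ℝ}

theorem monotoneOn_quadratic_Ici (hc : 0 ≤ c) (hl : 0 ≤ b + 2 * c * l) :
    MonotoneOn (fun x : ℝ ↦ a + b * x + c * x ^ 2) (Set.Ici l) := by
  intro x hx y hy hxy
  have slope_nonneg : 0 ≤ b + c * (x + y) := by
    linarith [mul_le_mul_of_nonneg_left hx.out hc, mul_le_mul_of_nonneg_left hy.out hc]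
  linarith [mul_nonneg (sub_nonneg.2 hxy) slope_nonneg]

theorem isLeast_quadratic_image (hs : IsLeast s l) (hc : 0 ≤ c) (hl : 0 ≤ b + 2 * c * l) :
    IsLeast ((fun x : ℝ ↦ a + b * x + c * x ^ 2) '' s) (a + b * l + c * l ^ 2) :=
  ((monotoneOn_quadratic_Ici hc hl).mono hs.2).map_isLeast hs

theorem isLeast_quadratic_image_of_vertex_mem (hc : 0 < c) (hs : -b / (2 * c) ∈ s) :
    IsLeast ((fun x : ℝ ↦ a + b * x + c * x ^ 2) '' s) (a - b ^ 2 / (4 * c)) := by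
  have complete_square (x : ℝ) :
      a + b * x + c * x ^ 2 = a - b ^ 2 / (4 * c) + c * (x - -b / (2 * c)) ^ 2 := by
    field_simp
    ring
  refine ⟨⟨_, hs, by simp [complete_square]⟩, ?_⟩
  rintro _ ⟨x, -, rfl⟩
  simp only [complete_square]
  exact le_add_of_nonneg_right (by positivity)

theorem isGreatest_quadratic_image (hl : l ∈ lowerBounds s) (hu : IsGreatest s u) (hc : 0 ≤ c)
    (h : 0 ≤ b + c * (l + u)) :
    IsGreatest ((fun x : ℝ ↦ a + b * x + c * x ^ 2) '' s) (a + b * u + c * u ^ 2) := by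
  refine ⟨Set.mem_image_of_mem _ hu.1, ?_⟩
  rintro _ ⟨x, hx, rfl⟩
  have slope_nonneg : 0 ≤ b + c * (x + u) := by
    linarith [mul_le_mul_of_nonneg_left (hl hx) hc]
  linarith [mul_nonneg (sub_nonneg.2 (hu.2 hx)) slope_nonneg]

end RealQuadratic

theorem re_image_sphere_zero {r : ℝ} (hr : 0 ≤ r) : re '' sphere (0 : ℂ) r = Set.Icc (-r) r := by
  ext x
  simp only [Set.mem_image, mem_sphere_zero_iff_norm, Set.mem_Icc, ← abs_le]
  constructor
  · rintro ⟨z, rfl, rfl⟩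
    exact abs_re_le_norm z
  · intro hx
    have sq_le : x ^ 2 ≤ r ^ 2 := sq_le_sq.2 (hx.trans (le_abs_self r))
    refine ⟨x + √(r ^ 2 - x ^ 2) * I, ?_, by simp⟩
    rw [norm_add_mul_I, Real.sq_sqrt (sub_nonneg.2 sq_le), add_sub_cancel, Real.sqrt_sq hr]

theorem re_quadratic (a b c : ℝ) (z : ℂ) :
    (a + b * z + c * z ^ 2 : ℂ).re = a - c * ‖z‖ ^ 2 + b * z.re + 2 * c * z.re ^ 2 := by
  rw [add_re, add_re, ofReal_re, re_ofReal_mul, re_ofReal_mul, pow_two z, mul_re, Complex.sq_norm,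
    normSq_apply]
  ring

theorem re_quadratic_image_sphere_zero (a b c : ℝ) {r : ℝ} (hr : 0 ≤ r) :
    (fun z : ℂ ↦ (a + b * z + c * z ^ 2).re) '' sphere 0 r =
      (fun x : ℝ ↦ a - c * r ^ 2 + b * x + 2 * c * x ^ 2) '' Set.Icc (-r) r := by
  rw [← re_image_sphere_zero hr, Set.image_image]
  refine Set.image_congr fun z hz ↦ ?_
  rw [re_quadratic, mem_sphere_zero_iff_norm.1 hz]

-- The factors `1 *` keep the form `a + b * x + c * x ^ 2` to which the extremum lemmas apply.
theorem setOf_re_one_add_add_sq_div_two {r : ℝ} (hr : 0 ≤ r) :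
    {x : ℝ | ∃ z : ℂ, ‖z‖ = r ∧ x = (1 + z + z ^ 2 / 2).re} =
      (fun x : ℝ ↦ (1 - r ^ 2 / 2) + 1 * x + 1 * x ^ 2) '' Set.Icc (-r) r := by
  convert re_quadratic_image_sphere_zero 1 1 (1 / 2) hr using 1
  · ext x
    simp [eq_comm, div_eq_inv_mul]
  · norm_num [div_eq_inv_mul]

theorem stmt_0_general (r : ℝ) (hr : 0 ≤ r) :
    (r ≤ 1 / 2 →
      IsLeast {x : ℝ | ∃ z : ℂ, ‖z‖ = r ∧ x = (1 + z + z ^ 2 / 2).re} (1 - r + r ^ 2 / 2)) ∧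
    (1 / 2 ≤ r →
      IsLeast {x : ℝ | ∃ z : ℂ, ‖z‖ = r ∧ x = (1 + z + z ^ 2 / 2).re} ((3 - 2 * r ^ 2) / 4)) ∧
    IsGreatest {x : ℝ | ∃ z : ℂ, ‖z‖ = r ∧ x = (1 + z + z ^ 2 / 2).re} (1 + r + r ^ 2 / 2) := by
  have neg_le : -r ≤ r := neg_le_self hr
  rw [setOf_re_one_add_add_sq_div_two hr]
  refine ⟨fun h ↦ ?_, fun h ↦ ?_, ?_⟩
  · have slope_nonneg : 0 ≤ 1 + 2 * 1 * -r := by linarith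
    convert isLeast_quadratic_image (isLeast_Icc neg_le) zero_le_one slope_nonneg using 1
    ring
  · have vertex_mem : -1 / (2 * 1) ∈ Set.Icc (-r) r := ⟨by linarith, by linarith⟩
    convert isLeast_quadratic_image_of_vertex_mem one_pos vertex_mem using 1
    ring
  · have slope_nonneg : 0 ≤ 1 + 1 * (-r + r) := by simp
    convert isGreatest_quadratic_image (isLeast_Icc neg_le).2 (isGreatest_Icc neg_le)
      zero_le_one slope_nonneg using 1
    ring

theorem stmt_0 (r : ℝ) (hr0 : 0 < r) (hr1 : r < 1) :
    (r ≤ 1 / 2 →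
      IsLeast {x : ℝ | ∃ z : ℂ, ‖z‖ = r ∧ x = (1 + z + z ^ 2 / 2).re} (1 - r + r ^ 2 / 2)) ∧
    (1 / 2 ≤ r →
      IsLeast {x : ℝ | ∃ z : ℂ, ‖z‖ = r ∧ x = (1 + z + z ^ 2 / 2).re} ((3 - 2 * r ^ 2) / 4)) ∧
    IsGreatest {x : ℝ | ∃ z : ℂ, ‖z‖ = r ∧ x = (1 + z + z ^ 2 / 2).re} (1 + r + r ^ 2 / 2) :=
  stmt_0_general r hr0.le
end

section
/- Let 1/2 < a < 5/2 be real and define r_a = a − 1/2 if 1/2 < a ≤ 3/2 and r_a = 5/2 − a if 3/2 ≤ a < 5/2 (equivalently r_a = min(a − 1/2, 5/2 − a)). Then the open disk {w ∈ ℂ : |w − a| < r_a} is contained in Ω_car. -/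
open Complex Metric

def omegaCar : Set ℂ := {w : ℂ | ∃ u : ℂ, ‖u‖ < 1 ∧ w = 1 + u + u ^ 2 / 2}

def SCar (f : ℂ → ℂ) : Prop :=
  DifferentiableOn ℂ f (Metric.ball (0 : ℂ) 1) ∧ f 0 = 0 ∧ deriv f 0 = 1 ∧
    (∀ z : ℂ, ‖z‖ < 1 → z ≠ 0 → f z ≠ 0) ∧
    (∀ z : ℂ, ‖z‖ < 1 → z ≠ 0 → z * deriv f z / f z ∈ omegaCar)

/-!
Since `1 + u + u² / 2 = ((1 + u)² + 1) / 2`, a point `w` lies in `omegaCar` exactly when `2w - 1`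
has a square root `s` with `‖s - 1‖ < 1`, that is, with `‖s‖² < 2 Re s`. If `‖w - 3/2‖ < 1`, then
any square root `s` satisfies `‖s² - 2‖ < 2`, so `‖s‖⁴ < 4 Re (s²) ≤ 4 (Re s)²`, and `s` or `-s` is
such a root. Thus the whole disk of radius `1` about `3/2` lies in `omegaCar`, and it contains every
disk centred on the real axis that has a diameter on the segment `(1/2, 5/2)`.
-/

theorem norm_sub_lt_norm_iff {E : Type*} [NormedAddCommGroup E] [InnerProductSpace ℝ E]
    (x y : E) : ‖x - y‖ < ‖y‖ ↔ ‖x‖ ^ 2 < 2 * inner ℝ x y := by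
  rw [← sq_lt_sq₀ (norm_nonneg _) (norm_nonneg _), norm_sub_sq_real]
  constructor <;> intro h <;> linarith

theorem inner_sq_sq_le_sq_inner (s c : ℂ) : inner ℝ (s ^ 2) (c ^ 2) ≤ inner ℝ s c ^ 2 := by
  have re_sq_le (z : ℂ) : (z ^ 2).re ≤ z.re ^ 2 := by
    simp only [pow_two, mul_re]
    linarith [mul_self_nonneg z.im]
  simpa only [Complex.inner, map_pow, ← mul_pow] using re_sq_le (c * starRingEnd ℂ s)

theorem ball_two_mul_sq_subset_image_sq_ball (c : ℂ) :
    ball (2 * c ^ 2) ‖2 * c ^ 2‖ ⊆ (fun s : ℂ => s ^ 2) '' ball c ‖c‖ := by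
  intro z hz
  obtain ⟨s, rfl⟩ := IsAlgClosed.exists_pow_nat_eq z two_pos
  have norm_sq_sq_lt : (‖s‖ ^ 2) ^ 2 < (2 * inner ℝ s c) ^ 2 := by
    rw [mem_ball_iff_norm, norm_sub_lt_norm_iff, ← ofReal_ofNat, ← real_smul,
      real_inner_smul_right, norm_pow] at hz
    linarith [inner_sq_sq_le_sq_inner s c]
  have norm_sq_lt : ‖s‖ ^ 2 < |2 * inner ℝ s c| := lt_of_pow_lt_pow_left₀ 2 (abs_nonneg _) <| by
    rwa [sq_abs]
  rcases lt_abs.mp norm_sq_lt with hpos | hneg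
  · exact ⟨s, mem_ball_iff_norm.mpr ((norm_sub_lt_norm_iff s c).mpr hpos), rfl⟩
  · refine ⟨-s, mem_ball_iff_norm.mpr ((norm_sub_lt_norm_iff (-s) c).mpr ?_), neg_sq s⟩
    rwa [norm_neg, inner_neg_left, mul_neg]

theorem mem_omegaCar_iff_mem_image_sq_ball {w : ℂ} :
    w ∈ omegaCar ↔ 2 * w - 1 ∈ (fun s : ℂ => s ^ 2) '' ball 1 1 := by
  constructor
  · rintro ⟨u, hu, rfl⟩
    exact ⟨1 + u, by simpa using hu, by ring⟩
  · rintro ⟨s, hs, hsw⟩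
    exact ⟨s - 1, mem_ball_iff_norm.mp hs, by linear_combination -hsw / 2⟩

theorem ball_three_halves_one_subset_omegaCar : ball (3 / 2 : ℂ) 1 ⊆ omegaCar := by
  intro w hw
  have two_mul_sub_one_mem : 2 * w - 1 ∈ ball (2 * 1 ^ 2 : ℂ) ‖(2 * 1 ^ 2 : ℂ)‖ := by
    have scale : 2 * w - 1 - 2 * 1 ^ 2 = 2 * (w - 3 / 2) := by ring
    rw [mem_ball_iff_norm] at hw ⊢
    rw [scale, norm_mul, one_pow, mul_one, norm_ofNat]
    linarith
  simpa only [mem_omegaCar_iff_mem_image_sq_ball, norm_one] using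
    ball_two_mul_sq_subset_image_sq_ball 1 two_mul_sub_one_mem

theorem stmt_1 (a : ℝ) (h1 : 1 / 2 < a) (h2 : a < 5 / 2) :
    Metric.ball (a : ℂ) (min (a - 1 / 2) (5 / 2 - a)) ⊆ omegaCar := by
  refine (ball_subset_ball' ?_).trans ball_three_halves_one_subset_omegaCar
  have dist_center : dist (a : ℂ) (3 / 2) = |a - 3 / 2| := by
    rw [← Real.dist_eq, ← isometry_ofReal.dist_eq]
    norm_num
  rw [dist_center]
  rcases abs_cases (a - 3 / 2) with ⟨h, -⟩ | ⟨h, -⟩ <;> rw [h]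
  · linarith [min_le_right (a - 1 / 2) (5 / 2 - a)]
  · linarith [min_le_left (a - 1 / 2) (5 / 2 - a)]
end

section
/- Let 1/2 < a < 5/2 be real and define R_a = 5/2 − a if 1/2 < a ≤ 7/6 and R_a = √((2a − 1)³/(8(a − 1))) if 7/6 ≤ a < 5/2. Then Ω_car is contained in the open disk {w ∈ ℂ : |w − a| < R_a}. -/
open Complex Metric

/-! On the unit circle, `‖φ(u) - a‖²` with `φ(u) = 1 + u + u² / 2` is a quadratic polynomial in
`x = re u`, with leading coefficient `2 (1 - a)`. When `a ≤ 7 / 6`, its maximum on `[-1, 1]` is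
`(5 / 2 - a)²`, attained at the endpoint `x = 1`; when `7 / 6 ≤ a`, the maximum is attained at the
vertex `x = (3 - 2 a) / (4 (a - 1))`. The strict maximum principle turns the bound on the circle
into a strict bound inside. -/

theorem mapsTo_ball_of_mapsTo_frontier {E F : Type*} [NormedAddCommGroup E] [NormedSpace ℂ E]
    [Nontrivial E] [NormedAddCommGroup F] [NormedSpace ℂ F] [StrictConvexSpace ℝ F]
    {f : E → F} {U : Set E} {c : F} {r : ℝ} (hUb : Bornology.IsBounded U) (hUo : IsOpen U)
    (hUc : IsPreconnected U) (hf : DiffContOnCl ℂ f U) (hne : (f '' U).Nontrivial)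
    (hfr : Set.MapsTo f (frontier U) (closedBall c r)) : Set.MapsTo f U (ball c r) := by
  have hg : DiffContOnCl ℂ (fun z ↦ f z - c) U := hf.sub_const c
  have hle : ∀ z ∈ U, ‖f z - c‖ ≤ r := fun z hz ↦
    norm_le_of_forall_mem_frontier_norm_le hUb hg
      (fun w hw ↦ mem_closedBall_iff_norm.1 (hfr hw)) (subset_closure hz)
  intro z hz
  rw [mem_ball_iff_norm]
  refine (hle z hz).lt_of_ne fun heq ↦ hne.not_subsingleton ?_
  have hmax : IsMaxOn (norm ∘ fun w ↦ f w - c) U z := fun w hw ↦ (hle w hw).trans_eq heq.symm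
  have hconst : ∀ w ∈ U, f w = f z := fun w hw ↦
    sub_left_injective
      (eqOn_of_isPreconnected_of_isMaxOn_norm hUc hUo hg.differentiableOn hz hmax hw)
  rintro _ ⟨v, hv, rfl⟩ _ ⟨w, hw, rfl⟩
  rw [hconst v hv, hconst w hw]

/-- The map `φ_car(u) = 1 + u + u² / 2`, which sends the unit disk onto `Ω_car`. -/
noncomputable def cardioidMap (u : ℂ) : ℂ := 1 + u + u ^ 2 / 2

theorem omegaCar_eq_image_cardioidMap : omegaCar = cardioidMap '' ball 0 1 := by
  ext w
  simp only [omegaCar, cardioidMap, Set.mem_ofPred_eq, Set.mem_image, mem_ball_zero_iff,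
    eq_comm (a := w)]

theorem differentiable_cardioidMap : Differentiable ℂ cardioidMap := by
  unfold cardioidMap
  fun_prop

theorem nontrivial_omegaCar : omegaCar.Nontrivial :=
  ⟨1, ⟨0, by norm_num, by norm_num⟩, 13 / 8, ⟨1 / 2, by norm_num, by norm_num⟩, by norm_num⟩

theorem omegaCar_subset_ball_of_mapsTo_sphere {c : ℂ} {r : ℝ}
    (h : Set.MapsTo cardioidMap (sphere 0 1) (closedBall c r)) : omegaCar ⊆ ball c r := by
  have hne := nontrivial_omegaCar
  rw [omegaCar_eq_image_cardioidMap] at hne ⊢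
  exact (mapsTo_ball_of_mapsTo_frontier isBounded_ball isOpen_ball
    (convex_ball (0 : ℂ) 1).isPreconnected differentiable_cardioidMap.diffContOnCl hne
    (by rwa [frontier_ball (0 : ℂ) one_ne_zero])).image_subset

theorem sq_norm_cardioidMap_sub_ofReal (a : ℝ) {u : ℂ} (hu : ‖u‖ = 1) :
    ‖cardioidMap u - a‖ ^ 2 =
      2 * (1 - a) * u.re ^ 2 + (3 - 2 * a) * u.re + (a ^ 2 - a + 5 / 4) := by
  have hcircle : u.im ^ 2 = 1 - u.re ^ 2 := by rw [← sq_norm_sub_sq_re, hu, one_pow]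
  have hre : (cardioidMap u - a).re = 1 + u.re + (u.re ^ 2 - u.im ^ 2) / 2 - a := by
    simp [cardioidMap, sq]
  have him : (cardioidMap u - a).im = u.im * (1 + u.re) := by
    simp only [cardioidMap, sq, sub_im, add_im, one_im, zero_add, div_ofNat_im, mul_im,
      ofReal_im, sub_zero]
    ring
  calc ‖cardioidMap u - a‖ ^ 2
      = (1 + u.re + (u.re ^ 2 - u.im ^ 2) / 2 - a) ^ 2 + u.im ^ 2 * (1 + u.re) ^ 2 := by
        rw [Complex.sq_norm, normSq_apply, hre, him]
        ring
    _ = 2 * (1 - a) * u.re ^ 2 + (3 - 2 * a) * u.re + (a ^ 2 - a + 5 / 4) := by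
        rw [hcircle]
        ring

theorem norm_cardioidMap_sub_ofReal_le {a : ℝ} (ha : a ≤ 7 / 6) {u : ℂ} (hu : ‖u‖ = 1) :
    ‖cardioidMap u - a‖ ≤ 5 / 2 - a := by
  obtain ⟨hneg, hpos⟩ : -1 ≤ u.re ∧ u.re ≤ 1 := abs_le.1 (hu ▸ abs_re_le_norm u)
  have hprod : 0 ≤ (1 + u.re) * (7 - 6 * a) := mul_nonneg (by linarith) (by linarith)
  have hfactor : 0 ≤ 2 * (1 - a) * u.re + (5 - 4 * a) := by linarith
  refine le_of_sq_le_sq ?_ (by linarith)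
  calc ‖cardioidMap u - a‖ ^ 2
      = (5 / 2 - a) ^ 2 - (1 - u.re) * (2 * (1 - a) * u.re + (5 - 4 * a)) := by
        rw [sq_norm_cardioidMap_sub_ofReal a hu]
        ring
    _ ≤ (5 / 2 - a) ^ 2 := sub_le_self _ (mul_nonneg (sub_nonneg.2 hpos) hfactor)

theorem norm_cardioidMap_sub_ofReal_le_sqrt {a : ℝ} (ha : 1 < a) {u : ℂ} (hu : ‖u‖ = 1) :
    ‖cardioidMap u - a‖ ≤ √((2 * a - 1) ^ 3 / (8 * (a - 1))) := by
  have ha' : 0 < a - 1 := sub_pos.2 ha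
  apply Real.le_sqrt_of_sq_le
  calc ‖cardioidMap u - a‖ ^ 2
      = (2 * a - 1) ^ 3 / (8 * (a - 1)) -
          2 * (a - 1) * (u.re - (3 - 2 * a) / (4 * (a - 1))) ^ 2 := by
        rw [sq_norm_cardioidMap_sub_ofReal a hu]
        field_simp
        ring
    _ ≤ (2 * a - 1) ^ 3 / (8 * (a - 1)) := sub_le_self _ (by positivity)

theorem omegaCar_subset_ball_of_le {a : ℝ} (ha : a ≤ 7 / 6) :
    omegaCar ⊆ ball (a : ℂ) (5 / 2 - a) :=
  omegaCar_subset_ball_of_mapsTo_sphere fun _ hu ↦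
    mem_closedBall_iff_norm.2 (norm_cardioidMap_sub_ofReal_le ha (mem_sphere_zero_iff_norm.1 hu))

theorem omegaCar_subset_ball_sqrt_of_one_lt {a : ℝ} (ha : 1 < a) :
    omegaCar ⊆ ball (a : ℂ) √((2 * a - 1) ^ 3 / (8 * (a - 1))) :=
  omegaCar_subset_ball_of_mapsTo_sphere fun _ hu ↦
    mem_closedBall_iff_norm.2
      (norm_cardioidMap_sub_ofReal_le_sqrt ha (mem_sphere_zero_iff_norm.1 hu))

theorem stmt_2_general (a Ra : ℝ)
    (hRa : Ra = if a ≤ 7 / 6 then 5 / 2 - a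
      else √((2 * a - 1) ^ 3 / (8 * (a - 1)))) :
    omegaCar ⊆ ball (a : ℂ) Ra := by
  subst hRa
  split_ifs with ha
  · exact omegaCar_subset_ball_of_le ha
  · exact omegaCar_subset_ball_sqrt_of_one_lt (by linarith)

theorem stmt_2 (a : ℝ) (h1 : 1 / 2 < a) (h2 : a < 5 / 2) (Ra : ℝ)
    (hRa : Ra = if a ≤ 7 / 6 then 5 / 2 - a
      else Real.sqrt ((2 * a - 1) ^ 3 / (8 * (a - 1)))) :
    omegaCar ⊆ Metric.ball (a : ℂ) Ra :=
  stmt_2_general a Ra hRa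
end

section
/- If f ∈ S*_car, then Re(z f'(z)/f(z)) > 1/4 for every z ∈ 𝔻 \ {0}; consequently S*_car ⊂ S*(α), the class of starlike functions of order α, for every 0 ≤ α ≤ 1/4. -/
open Complex Metric

/- The last two terms vanish at `u = exp (± 2πi/3)`, on the boundary of the disk, so `1 / 4` is the
best lower bound for `‖u‖ < 1`. -/
theorem re_one_add_add_sq_div_two (u : ℂ) :
    (1 + u + u ^ 2 / 2).re = 1 / 4 + (u.re + 1 / 2) ^ 2 + (1 - ‖u‖ ^ 2) / 2 := by
  rw [Complex.sq_norm, normSq_apply]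
  simp only [add_re, one_re, div_ofNat_re, sq, mul_re]
  ring

theorem one_fourth_lt_re_of_mem_omegaCar {w : ℂ} (hw : w ∈ omegaCar) : 1 / 4 < w.re := by
  obtain ⟨u, hu, rfl⟩ := hw
  have norm_sq_lt_one : ‖u‖ ^ 2 < 1 := pow_lt_one₀ (norm_nonneg u) hu two_ne_zero
  rw [re_one_add_add_sq_div_two]
  linarith [sq_nonneg (u.re + 1 / 2)]

theorem stmt_4 (f : ℂ → ℂ) (hf : SCar f) :
    (∀ z : ℂ, ‖z‖ < 1 → z ≠ 0 → 1 / 4 < (z * deriv f z / f z).re) ∧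
    (∀ α : ℝ, 0 ≤ α → α ≤ 1 / 4 →
      ∀ z : ℂ, ‖z‖ < 1 → z ≠ 0 → α < (z * deriv f z / f z).re) := by
  obtain ⟨-, -, -, -, mem_omegaCar⟩ := hf
  have order_one_fourth (z : ℂ) (hz : ‖z‖ < 1) (hz₀ : z ≠ 0) :
      1 / 4 < (z * deriv f z / f z).re :=
    one_fourth_lt_re_of_mem_omegaCar (mem_omegaCar z hz hz₀)
  exact ⟨order_one_fourth, fun α _ hα z hz hz₀ => hα.trans_lt (order_one_fourth z hz hz₀)⟩
end

section
/- If f ∈ S*_car, then |arg(z f'(z)/f(z))| < arctan(3√15/5) for every z ∈ 𝔻 \ {0}; consequently S*_car ⊂ SS*(β), the class of strongly starlike functions of order β, for every β with β₀ ≤ β ≤ 1, where β₀ = (2/π)·arctan(3√15/5). -/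
open Complex Metric

/-!
In the coordinate `v = 1 + u` the cardioid is `w = (1 + v ^ 2) / 2` with `v` in the disk
`‖v - 1‖ < 1`. Writing `v = a + b i`, the point `1 + v ^ 2` lies in the sector of half-angle
`arctan c` as soon as `2 * |a| * |b| < c * (1 + a ^ 2 - b ^ 2)`. Weighted AM-GM with weight
`t = √15 / 3` replaces the cross term by `t * a ^ 2 + t⁻¹ * b ^ 2`, and for `c = 3√15 / 5` the
inequality becomes `12 * b ^ 2 < 9 + 4 * a ^ 2`. On the disk `b ^ 2 < 2 * a - a ^ 2`, so this is
`0 ≤ (4 * a - 3) ^ 2`; the constants `c` and `t` come from the contact point `4 * v = 3 + √15 i`.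
-/

theorem arg_eq_arctan_im_div_re {w : ℂ} (hw : 0 < w.re) :
    w.arg = Real.arctan (w.im / w.re) := by
  obtain ⟨hlower, hupper⟩ := abs_lt.mp (abs_arg_lt_pi_div_two_iff.mpr (Or.inl hw))
  rw [← tan_arg, Real.arctan_tan hlower hupper]

theorem abs_arg_lt_arctan_of_abs_im_lt {w : ℂ} {c : ℝ} (hc : 0 ≤ c) (h : |w.im| < c * w.re) :
    |w.arg| < Real.arctan c := by
  have hre : 0 < w.re := pos_of_mul_pos_right ((abs_nonneg _).trans_lt h) hc
  have hslope : |w.im / w.re| < c := by rwa [abs_div, abs_of_pos hre, div_lt_iff₀ hre]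
  obtain ⟨hlower, hupper⟩ := abs_lt.mp hslope
  rw [arg_eq_arctan_im_div_re hre, abs_lt, ← Real.arctan_neg]
  exact ⟨Real.arctan_strictMono hlower, Real.arctan_strictMono hupper⟩

theorem norm_sub_one_lt_one_iff {v : ℂ} : ‖v - 1‖ < 1 ↔ v.im ^ 2 < 2 * v.re - v.re ^ 2 := by
  rw [← sq_lt_one_iff₀ (norm_nonneg _), Complex.sq_norm, normSq_apply, sub_re, sub_im, one_re,
    one_im]
  constructor <;> intro h <;> linarith

theorem twelve_mul_im_sq_lt_of_norm_sub_one_lt_one {v : ℂ} (hv : ‖v - 1‖ < 1) :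
    12 * v.im ^ 2 < 9 + 4 * v.re ^ 2 := by
  linarith [norm_sub_one_lt_one_iff.mp hv, sq_nonneg (4 * v.re - 3)]

theorem abs_im_one_add_sq_lt {v : ℂ} (hv : 12 * v.im ^ 2 < 9 + 4 * v.re ^ 2) :
    |(1 + v ^ 2).im| < 3 * √15 / 5 * (1 + v ^ 2).re := by
  have hre : (1 + v ^ 2).re = 1 + v.re ^ 2 - v.im ^ 2 := by
    simp only [add_re, one_re, pow_two, mul_re]
    ring
  have him : (1 + v ^ 2).im = 2 * v.re * v.im := by
    simp only [add_im, one_im, pow_two, mul_im]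
    ring
  have hinv : (√15 / 3)⁻¹ = √(15 : ℝ) / 5 := by
    field_simp
    norm_num
  calc |(1 + v ^ 2).im|
      = 2 * |v.re| * |v.im| := by rw [him, abs_mul, abs_mul, abs_two]
    _ ≤ √15 / 3 * |v.re| ^ 2 + (√15 / 3)⁻¹ * |v.im| ^ 2 :=
        two_mul_le_add_mul_sq (by positivity)
    _ = √15 / 15 * (5 * v.re ^ 2 + 3 * v.im ^ 2) := by
        rw [hinv, sq_abs, sq_abs]
        ring
    _ < √15 / 15 * (9 * (1 + v.re ^ 2 - v.im ^ 2)) := by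
        gcongr ?_ * ?_
        linarith
    _ = 3 * √15 / 5 * (1 + v ^ 2).re := by
        rw [hre]
        ring

theorem mem_omegaCar_iff {w : ℂ} :
    w ∈ omegaCar ↔ ∃ v : ℂ, ‖v - 1‖ < 1 ∧ w = (2⁻¹ : ℝ) * (1 + v ^ 2) := by
  constructor
  · rintro ⟨u, hu, rfl⟩
    refine ⟨1 + u, by rwa [add_sub_cancel_left], ?_⟩
    push_cast
    ring
  · rintro ⟨v, hv, rfl⟩
    refine ⟨v - 1, hv, ?_⟩
    push_cast
    ring

theorem abs_arg_lt_of_mem_omegaCar {w : ℂ} (hw : w ∈ omegaCar) :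
    |w.arg| < Real.arctan (3 * √15 / 5) := by
  obtain ⟨v, hv, rfl⟩ := mem_omegaCar_iff.mp hw
  rw [arg_real_mul _ (by norm_num)]
  exact abs_arg_lt_arctan_of_abs_im_lt (by positivity)
    (abs_im_one_add_sq_lt (twelve_mul_im_sq_lt_of_norm_sub_one_lt_one hv))

theorem stmt_5 (f : ℂ → ℂ) (hf : SCar f) :
    (∀ z : ℂ, ‖z‖ < 1 → z ≠ 0 →
      |(z * deriv f z / f z).arg| < Real.arctan (3 * Real.sqrt 15 / 5)) ∧
    (∀ β : ℝ, (2 / Real.pi) * Real.arctan (3 * Real.sqrt 15 / 5) ≤ β → β ≤ 1 →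
      ∀ z : ℂ, ‖z‖ < 1 → z ≠ 0 →
        |(z * deriv f z / f z).arg| < β * Real.pi / 2) := by
  obtain ⟨-, -, -, -, hmem⟩ := hf
  have harg : ∀ z : ℂ, ‖z‖ < 1 → z ≠ 0 →
      |(z * deriv f z / f z).arg| < Real.arctan (3 * Real.sqrt 15 / 5) :=
    fun z hz hz₀ => abs_arg_lt_of_mem_omegaCar (hmem z hz hz₀)
  refine ⟨harg, fun β hβ _ z hz hz₀ => ?_⟩
  calc |(z * deriv f z / f z).arg|
      < Real.arctan (3 * Real.sqrt 15 / 5) := harg z hz hz₀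
    _ = 2 / Real.pi * Real.arctan (3 * Real.sqrt 15 / 5) * Real.pi / 2 := by field_simp
    _ ≤ β * Real.pi / 2 := by gcongr
end

section
/- Let α₀ = (e − 2)/(2(e − 1)) and let α₀ ≤ α < 1. If f is analytic on 𝔻 with f(0) = 0, f'(0) = 1, f(z) ≠ 0 on 𝔻 \ {0}, and z f'(z)/f(z) ∈ {α + (1 − α)e^w : w ∈ 𝔻} for every z ∈ 𝔻 \ {0} (i.e. f ∈ S*_e(α)), then f ∈ S*_car. -/
open Complex Metric

/-!
Put `d = W - 1`. For a square root `s` of `1 + 2 * d`, the point `W` lies in the cardioid domain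
exactly when `s` or `-s` lies in the disc `‖s - 1‖ < 1`, and the parallelogram law turns this into
`‖2 * d‖ ^ 2 < 1 + 2 * ‖1 + 2 * d‖`. In this form the domain is visibly star-shaped about `1`, so
only the extremal `α = (e - 2) / (2 * (e - 1))` matters, for which `1 - α = (2 * (1 - e⁻¹))⁻¹`.
There `1 + 2 * d` is a real multiple of `e ^ w - e⁻¹`, whose norm is at least `e ^ w.re - e⁻¹`; as
`cos y ≥ 1 - y ^ 2 / 2`, the inequality reduces to the positivity on `(-1, 1)` of a concave
function of `w.re` that vanishes at `-1` and is positive at `1`.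
-/

lemma norm_sq_sub_one_sq_lt_iff {s : ℂ} :
    ‖s ^ 2 - 1‖ ^ 2 < 1 + 2 * ‖s ^ 2‖ ↔ ‖s - 1‖ < 1 ∨ ‖s + 1‖ < 1 := by
  have factorization : ‖s ^ 2 - 1‖ ^ 2 - (1 + 2 * ‖s ^ 2‖) =
      (‖s - 1‖ ^ 2 - 1) * (‖s + 1‖ ^ 2 - 1) := by
    have parallelogram := parallelogram_law_with_norm ℝ s 1
    rw [norm_one] at parallelogram
    have norm_product : ‖s ^ 2 - 1‖ = ‖s - 1‖ * ‖s + 1‖ := by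
      rw [← norm_mul]
      ring_nf
    rw [norm_product, norm_pow]
    linear_combination parallelogram
  have two_le_sum : 2 ≤ ‖s - 1‖ + ‖s + 1‖ := by
    calc (2 : ℝ) = ‖(s + 1) - (s - 1)‖ := by norm_num
      _ ≤ ‖s - 1‖ + ‖s + 1‖ := (norm_sub_le _ _).trans_eq (add_comm _ _)
  rw [← sub_neg, factorization, mul_neg_iff]
  simp only [sub_pos, sub_neg, sq_lt_one_iff₀, one_lt_sq_iff₀, norm_nonneg]
  constructor
  · rintro (⟨-, h⟩ | ⟨h, -⟩)
    · exact .inr h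
    · exact .inl h
  · rintro (h | h)
    · exact .inr ⟨h, by linarith⟩
    · exact .inl ⟨by linarith, h⟩

lemma one_add_mem_omegaCar_iff {d : ℂ} :
    1 + d ∈ omegaCar ↔ ‖2 * d‖ ^ 2 < 1 + 2 * ‖1 + 2 * d‖ := by
  have sqrt_criterion {s : ℂ} (hs : s ^ 2 = 1 + 2 * d) :
      ‖2 * d‖ ^ 2 < 1 + 2 * ‖1 + 2 * d‖ ↔ ‖s - 1‖ < 1 ∨ ‖s + 1‖ < 1 := by
    rw [← norm_sq_sub_one_sq_lt_iff, hs, add_sub_cancel_left]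
  constructor
  · rintro ⟨u, hu, hd⟩
    refine (sqrt_criterion (s := 1 + u) (by linear_combination -2 * hd)).2 (.inl ?_)
    rwa [add_sub_cancel_left]
  · intro h
    obtain ⟨s, hs⟩ := IsAlgClosed.exists_pow_nat_eq (1 + 2 * d) two_pos
    rcases (sqrt_criterion hs).1 h with hs_sub | hs_add
    · exact ⟨s - 1, hs_sub, by linear_combination -hs / 2⟩
    · refine ⟨-(s + 1), ?_, by linear_combination -hs / 2⟩
      rwa [norm_neg]

lemma one_add_smul_mem_omegaCar_iff {γ : ℝ} (hγ : 0 < γ) {z : ℂ} :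
    1 + (2 * γ)⁻¹ • z ∈ omegaCar ↔ ‖z‖ ^ 2 < γ ^ 2 + 2 * γ * ‖γ + z‖ := by
  have two_mul_smul : 2 * (2 * γ)⁻¹ • z = γ⁻¹ • z := by
    simp only [real_smul]
    push_cast
    ring
  have one_add_smul : 1 + γ⁻¹ • z = γ⁻¹ • (γ + z) := by
    rw [smul_add, real_smul (z := γ), ← ofReal_mul, inv_mul_cancel₀ hγ.ne', ofReal_one]
  rw [one_add_mem_omegaCar_iff, two_mul_smul, one_add_smul, norm_smul, norm_smul,
    Real.norm_of_nonneg (inv_nonneg.2 hγ.le), ← mul_lt_mul_iff_right₀ (pow_pos hγ 2)]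
  field_simp

lemma starConvex_omegaCar : StarConvex ℝ 1 omegaCar := by
  have one_mem : (1 : ℂ) ∈ omegaCar := ⟨0, by simp⟩
  rw [starConvex_iff_forall_pos one_mem]
  intro W hW a b ha hb hab
  obtain ⟨d, rfl⟩ : ∃ d, W = 1 + d := ⟨W - 1, by ring⟩
  have combination_eq : a • (1 : ℂ) + b • (1 + d) = 1 + b • d := by
    rw [smul_add, ← add_assoc, ← add_smul, hab, one_smul]
  have norm_two_mul : ‖2 * b • d‖ = b * ‖2 * d‖ := by
    rw [mul_smul_comm, norm_smul, Real.norm_of_nonneg hb.le]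
  have smul_norm_le : b * ‖1 + 2 * d‖ ≤ ‖1 + 2 * b • d‖ + a := by
    calc b * ‖1 + 2 * d‖ = ‖b • (1 + 2 * d)‖ := by rw [norm_smul, Real.norm_of_nonneg hb.le]
      _ = ‖(1 + 2 * b • d) - a • (1 : ℂ)‖ := by
          rw [mul_smul_comm, smul_add, eq_sub_of_add_eq' hab, sub_smul, one_smul]
          abel_nf
      _ ≤ ‖1 + 2 * b • d‖ + ‖a • (1 : ℂ)‖ := norm_sub_le _ _
      _ = ‖1 + 2 * b • d‖ + a := by rw [norm_smul, norm_one, mul_one, Real.norm_of_nonneg ha.le]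
  rw [one_add_mem_omegaCar_iff] at hW
  rw [combination_eq, one_add_mem_omegaCar_iff, norm_two_mul]
  calc (b * ‖2 * d‖) ^ 2 = b ^ 2 * ‖2 * d‖ ^ 2 := mul_pow ..
    _ < b ^ 2 * (1 + 2 * ‖1 + 2 * d‖) := by gcongr
    _ = b ^ 2 + 2 * b * (b * ‖1 + 2 * d‖) := by ring
    _ ≤ b ^ 2 + 2 * b * (‖1 + 2 * b • d‖ + a) := by gcongr
    _ = (1 - a ^ 2) + 2 * b * ‖1 + 2 * b • d‖ := by
      rw [eq_sub_of_add_eq' hab]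
      ring
    _ ≤ 1 + 2 * 1 * ‖1 + 2 * b • d‖ := by
      gcongr
      · linarith [sq_nonneg a]
      · linarith
    _ = 1 + 2 * ‖1 + 2 * b • d‖ := by rw [mul_one]

lemma concaveOn_sq_sub_exp_sub_mul_exp_neg {b : ℝ} (hb : 1 ≤ b) :
    ConcaveOn ℝ Set.univ fun x ↦ x ^ 2 - Real.exp x - b * Real.exp (-x) := by
  have hasDerivAt_exp_neg (x : ℝ) : HasDerivAt (fun t ↦ Real.exp (-t)) (-Real.exp (-x)) x := by
    simpa using (hasDerivAt_neg x).exp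
  have first_deriv (x : ℝ) : HasDerivAt (fun t ↦ t ^ 2 - Real.exp t - b * Real.exp (-t))
      (2 * x - Real.exp x + b * Real.exp (-x)) x :=
    (((hasDerivAt_pow 2 x).sub (Real.hasDerivAt_exp x)).sub
      ((hasDerivAt_exp_neg x).const_mul b)).congr_deriv (by push_cast; ring)
  have second_deriv (x : ℝ) : HasDerivAt (fun t ↦ 2 * t - Real.exp t + b * Real.exp (-t))
      (2 - Real.exp x - b * Real.exp (-x)) x :=
    ((((hasDerivAt_id x).const_mul 2).sub (Real.hasDerivAt_exp x)).add
      ((hasDerivAt_exp_neg x).const_mul b)).congr_deriv (by ring)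
  have second_deriv_nonpos (x : ℝ) : 2 - Real.exp x - b * Real.exp (-x) ≤ 0 := by
    have one_le_cosh := Real.one_le_cosh x
    have exp_neg_le := le_mul_of_one_le_left (Real.exp_nonneg (-x)) hb
    rw [Real.cosh_eq] at one_le_cosh
    linarith
  exact concaveOn_of_hasDerivWithinAt2_nonpos convex_univ
    (fun x _ ↦ (first_deriv x).continuousAt.continuousWithinAt)
    (fun x _ ↦ (first_deriv x).hasDerivWithinAt) (fun x _ ↦ (second_deriv x).hasDerivWithinAt)
    (fun x _ ↦ second_deriv_nonpos x)

lemma exp_add_mul_exp_neg_lt {x : ℝ} (hx : x ∈ Set.Ioc (-1) 1) :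
    Real.exp x + Real.exp (-1) * (4 - 3 * Real.exp (-1)) * Real.exp (-x) <
      x ^ 2 + 3 - 2 * Real.exp (-1) := by
  have exp_mul_exp : Real.exp (-1) * Real.exp 1 = 1 := by rw [← Real.exp_add]; simp
  have exp_neg_gt := Real.exp_neg_one_gt_d9
  have exp_neg_lt := Real.exp_neg_one_lt_d9
  have exp_lt := Real.exp_one_lt_d9
  set c := Real.exp (-1) with hc
  set b := c * (4 - 3 * c) with hb
  have one_le_coeff : 1 ≤ b := by
    have : 0 ≤ (3 * c - 1) * (1 - c) := mul_nonneg (by linarith) (by linarith)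
    linarith
  have coeff_mul_le : b * c ≤ 0.37 * 3 * 0.37 := by
    rw [hb]
    gcongr <;> linarith
  let g : ℝ → ℝ := fun t ↦ t ^ 2 - Real.exp t - b * Real.exp (-t)
  have concave : ConcaveOn ℝ Set.univ g := concaveOn_sq_sub_exp_sub_mul_exp_neg one_le_coeff
  have left_value : g (-1) = 2 * c - 3 := by
    simp only [g, neg_neg, ← hc]
    linear_combination (-(4 - 3 * c)) * exp_mul_exp
  have left_lt_right : g (-1) < g 1 := by
    rw [left_value]
    simp only [g, ← hc]
    linarith
  have left_lt : g (-1) < g x := by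
    by_contra! le_left
    exact left_lt_right.not_ge
      ((concave.right_le_of_le_left'' trivial trivial hx.1 hx.2 le_left).trans le_left)
  rw [left_value] at left_lt
  linarith

lemma norm_exp_sub_one_sq (w : ℂ) :
    ‖exp w - 1‖ ^ 2 = Real.exp w.re ^ 2 + 1 - 2 * Real.exp w.re * Real.cos w.im := by
  rw [Complex.sq_norm, normSq_sub, normSq_eq_norm_sq, norm_exp, map_one, map_one, mul_one, exp_re]
  ring

lemma norm_exp_sub_one_sq_lt {w : ℂ} (hw : ‖w‖ < 1) :
    ‖exp w - 1‖ ^ 2 <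
      (1 - Real.exp (-1)) ^ 2 + 2 * (1 - Real.exp (-1)) * ‖exp w - exp (-1)‖ := by
  have norm_sq_lt : w.re ^ 2 + w.im ^ 2 < 1 := by
    rw [← sq_lt_one_iff₀ (norm_nonneg w), Complex.sq_norm, normSq_apply] at hw
    linarith
  have cos_ge : (1 + w.re ^ 2) / 2 ≤ Real.cos w.im := by
    linarith [Real.one_sub_sq_div_two_le_cos (x := w.im)]
  have norm_ge : Real.exp w.re - Real.exp (-1) ≤ ‖exp w - exp (-1)‖ := by
    simpa [norm_exp] using norm_sub_norm_le (exp w) (exp (-1))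
  have re_mem : w.re ∈ Set.Ioo (-1) 1 := abs_lt.1 ((abs_re_le_norm w).trans_lt hw)
  have real_ineq := exp_add_mul_exp_neg_lt (Set.Ioo_subset_Ioc_self re_mem)
  have exp_mul_exp : Real.exp w.re * Real.exp (-w.re) = 1 := by rw [← Real.exp_add]; simp
  have coeff_nonneg : 0 ≤ 1 - Real.exp (-1) := by linarith [Real.exp_neg_one_lt_half]
  have exp_re_pos := Real.exp_pos w.re
  rw [norm_exp_sub_one_sq]
  set E := Real.exp w.re
  set c := Real.exp (-1)
  calc E ^ 2 + 1 - 2 * E * Real.cos w.im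
      ≤ E ^ 2 + 1 - 2 * E * ((1 + w.re ^ 2) / 2) := by gcongr
    _ = E * (E + c * (4 - 3 * c) * Real.exp (-w.re)) + 1 - c * (4 - 3 * c) -
          E * (1 + w.re ^ 2) := by
      linear_combination (-(c * (4 - 3 * c))) * exp_mul_exp
    _ < E * (w.re ^ 2 + 3 - 2 * c) + 1 - c * (4 - 3 * c) - E * (1 + w.re ^ 2) := by gcongr
    _ = (1 - c) ^ 2 + 2 * (1 - c) * (E - c) := by ring
    _ ≤ (1 - c) ^ 2 + 2 * (1 - c) * ‖exp w - exp (-1)‖ := by gcongr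

lemma one_add_smul_exp_sub_one_mem_omegaCar {w : ℂ} (hw : ‖w‖ < 1) :
    1 + (2 * (1 - Real.exp (-1)))⁻¹ • (exp w - 1) ∈ omegaCar := by
  have gap_pos : 0 < 1 - Real.exp (-1) := by linarith [Real.exp_neg_one_lt_half]
  have shift : ((1 - Real.exp (-1) : ℝ) : ℂ) + (exp w - 1) = exp w - exp (-1) := by
    push_cast
    ring
  rw [one_add_smul_mem_omegaCar_iff gap_pos, shift]
  exact norm_exp_sub_one_sq_lt hw

lemma add_mul_exp_mem_omegaCar {α : ℝ}
    (hα₀ : (Real.exp 1 - 2) / (2 * (Real.exp 1 - 1)) ≤ α) (hα₁ : α ≤ 1) {w : ℂ} (hw : ‖w‖ < 1) :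
    (α : ℂ) + (1 - α) * exp w ∈ omegaCar := by
  have gap_pos : 0 < 1 - Real.exp (-1) := by linarith [Real.exp_neg_one_lt_half]
  have ratio_nonneg : 0 ≤ (1 - α) * (2 * (1 - Real.exp (-1))) :=
    mul_nonneg (by linarith) (by linarith)
  have ratio_le_one : (1 - α) * (2 * (1 - Real.exp (-1))) ≤ 1 := by
    have one_lt_exp : 1 < Real.exp 1 := Real.one_lt_exp_iff.2 one_pos
    rw [div_le_iff₀ (by linarith)] at hα₀
    rw [Real.exp_neg]
    field_simp
    linarith
  have scale_eq : (α : ℂ) + (1 - α) * exp w = 1 +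
      ((1 - α) * (2 * (1 - Real.exp (-1)))) • (2 * (1 - Real.exp (-1)))⁻¹ • (exp w - 1) := by
    rw [smul_smul, mul_inv_cancel_right₀ (by positivity), real_smul]
    push_cast
    ring
  rw [scale_eq]
  exact starConvex_omegaCar.add_smul_mem (one_add_smul_exp_sub_one_mem_omegaCar hw)
    ratio_nonneg ratio_le_one

theorem stmt_7 (α : ℝ) (hα0 : (Real.exp 1 - 2) / (2 * (Real.exp 1 - 1)) ≤ α) (hα1 : α < 1)
    (f : ℂ → ℂ)
    (hfd : DifferentiableOn ℂ f (Metric.ball (0 : ℂ) 1))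
    (hf0 : f 0 = 0) (hf1 : deriv f 0 = 1)
    (hfne : ∀ z : ℂ, ‖z‖ < 1 → z ≠ 0 → f z ≠ 0)
    (hsub : ∀ z : ℂ, ‖z‖ < 1 → z ≠ 0 → ∃ w : ℂ, ‖w‖ < 1 ∧
      z * deriv f z / f z = (α : ℂ) + (1 - (α : ℂ)) * Complex.exp w) :
    SCar f := by
  refine ⟨hfd, hf0, hf1, hfne, fun z hz hz0 ↦ ?_⟩
  obtain ⟨w, hw, hzw⟩ := hsub z hz hz0
  rw [hzw]
  exact add_mul_exp_mem_omegaCar hα0 hα1.le hw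
end

section
/- Let 0 < c ≤ 3/4. If f is analytic on 𝔻 with f(0) = 0, f'(0) = 1, f(z) ≠ 0 on 𝔻 \ {0}, and z f'(z)/f(z) ∈ {√(1 + cw) : w ∈ 𝔻} for every z ∈ 𝔻 \ {0}, where √ denotes the principal square root (i.e. f ∈ S*(√(1+cz))), then f ∈ S*_car. -/
open Complex Metric

/-!
The disk of radius `1 / 2` about `1` fits between the two image domains. On the right half-plane
`|s + 1| ≥ 1`, so `|s - 1| ≤ |s ^ 2 - 1|`. Since `1 + u + u ^ 2 / 2 = (1 + (1 + u) ^ 2) / 2`,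
applying this to the principal square root of `2 * w - 1` shows that `|w - 1| < 1 / 2` forces `w`
into the cardioid domain. For the inner inclusion, `|s - 1| * (2 - |s - 1|) ≤ |s ^ 2 - 1|`, so
principal square roots of points within `3 / 4 = 1 / 2 * (2 - 1 / 2)` of `1` lie within `1 / 2`
of `1`.
-/

lemma cpow_inv_two_re_nonneg (a : ℂ) : 0 ≤ (a ^ (2⁻¹ : ℂ)).re :=
  (cpow_inv_two_re a).symm ▸ Real.sqrt_nonneg _

lemma norm_sq_sub_one (s : ℂ) : ‖s ^ 2 - 1‖ = ‖s - 1‖ * ‖s + 1‖ := by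
  rw [← norm_mul]
  ring_nf

lemma norm_sub_one_le_norm_sq_sub_one {s : ℂ} (hs : 0 ≤ s.re) : ‖s - 1‖ ≤ ‖s ^ 2 - 1‖ := by
  have one_le_norm_add_one : 1 ≤ ‖s + 1‖ :=
    calc 1 ≤ (s + 1).re := by simpa using hs
      _ ≤ ‖s + 1‖ := re_le_norm _
  rw [norm_sq_sub_one]
  exact le_mul_of_one_le_right (norm_nonneg _) one_le_norm_add_one

lemma norm_sub_one_mul_two_sub_le_norm_sq_sub_one (s : ℂ) :
    ‖s - 1‖ * (2 - ‖s - 1‖) ≤ ‖s ^ 2 - 1‖ := by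
  have two_le : 2 ≤ ‖s + 1‖ + ‖s - 1‖ :=
    calc (2 : ℝ) = ‖(s + 1) - (s - 1)‖ := by ring_nf; simp
      _ ≤ ‖s + 1‖ + ‖s - 1‖ := norm_sub_le _ _
  rw [norm_sq_sub_one]
  gcongr
  linarith

lemma norm_sub_one_lt_of_norm_sq_sub_one_lt {s : ℂ} {r : ℝ} (hs : 0 ≤ s.re)
    (h : ‖s ^ 2 - 1‖ < r * (2 - r)) : ‖s - 1‖ < r := by
  have mul_two_sub_lt : ‖s - 1‖ * (2 - ‖s - 1‖) < r * (2 - r) :=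
    (norm_sub_one_mul_two_sub_le_norm_sq_sub_one s).trans_lt h
  have lt_one : ‖s - 1‖ < 1 :=
    calc ‖s - 1‖ ≤ ‖s ^ 2 - 1‖ := norm_sub_one_le_norm_sq_sub_one hs
      _ < r * (2 - r) := h
      _ ≤ 1 := by linarith [sq_nonneg (r - 1)]
  -- `x ↦ x * (2 - x)` is increasing on `x ≤ 1`.
  by_contra! r_le
  nlinarith

lemma ball_one_half_subset_omegaCar : ball (1 : ℂ) (1 / 2) ⊆ omegaCar := by
  intro w hw
  rw [mem_ball_iff_norm] at hw
  set t : ℂ := (2 * w - 1) ^ (2⁻¹ : ℂ)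
  have t_sq : t ^ 2 = 2 * w - 1 := cpow_ofNat_inv_pow _ 2
  refine ⟨t - 1, ?_, by linear_combination -t_sq / 2⟩
  calc ‖t - 1‖ ≤ ‖t ^ 2 - 1‖ := norm_sub_one_le_norm_sq_sub_one (cpow_inv_two_re_nonneg _)
    _ = ‖2 * (w - 1)‖ := by rw [t_sq]; ring_nf
    _ = 2 * ‖w - 1‖ := by rw [norm_mul, norm_ofNat]
    _ < 1 := by linarith

lemma one_add_cpow_inv_two_mem_omegaCar {a : ℂ} (ha : ‖a‖ < 3 / 4) :
    (1 + a) ^ (2⁻¹ : ℂ) ∈ omegaCar := by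
  apply ball_one_half_subset_omegaCar
  rw [mem_ball_iff_norm]
  apply norm_sub_one_lt_of_norm_sq_sub_one_lt (cpow_inv_two_re_nonneg _)
  rw [cpow_ofNat_inv_pow, add_sub_cancel_left]
  linarith

theorem stmt_9 (c : ℝ) (hc0 : 0 < c) (hc1 : c ≤ 3 / 4)
    (f : ℂ → ℂ)
    (hfd : DifferentiableOn ℂ f (Metric.ball (0 : ℂ) 1))
    (hf0 : f 0 = 0) (hf1 : deriv f 0 = 1)
    (hfne : ∀ z : ℂ, ‖z‖ < 1 → z ≠ 0 → f z ≠ 0)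
    (hsub : ∀ z : ℂ, ‖z‖ < 1 → z ≠ 0 → ∃ w : ℂ, ‖w‖ < 1 ∧
      z * deriv f z / f z = (1 + (c : ℂ) * w) ^ ((1 : ℂ) / 2)) :
    SCar f := by
  refine ⟨hfd, hf0, hf1, hfne, fun z hz hz0 => ?_⟩
  obtain ⟨w, hw, hzw⟩ := hsub z hz hz0
  rw [hzw, one_div]
  apply one_add_cpow_inv_two_mem_omegaCar
  calc ‖(c : ℂ) * w‖ = c * ‖w‖ := by rw [norm_mul, norm_real, Real.norm_of_nonneg hc0.le]
    _ < c := mul_lt_of_lt_one_right hc0 hw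
    _ ≤ 3 / 4 := hc1
end

section
/- Let M ≥ (3 + √5)/4. If f ∈ S*_car, then |z f'(z)/f(z) − M| < M for every z ∈ 𝔻 \ {0}; that is, S*_car ⊂ S*[1, −(M−1)/M] for all M ≥ (3 + √5)/4. -/
open Complex Metric

/-!
Substituting `v = 1 + u` turns `1 + u + u² / 2` into `(1 + v²) / 2`, with `v` in the disc
`|v - 1| < 1`. A disc whose boundary passes through the origin, `|w - r| < r`, is the set
`|w|² < 2 r Re w`; so both the hypothesis on `v` and the claim are inequalities between squared
norms and real parts. In terms of `a = Re v` and `|v|²` the claim gets harder as `|v|²` grows, and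
at the extreme value `|v|² = 2a` it becomes the nonnegativity of a quadratic in `a` with
discriminant `-16 (4M² - 6M + 1)`, whose larger root in `M` is `(3 + √5) / 4`.
-/

lemma quadratic_nonneg_of_discrim_nonpos {K : Type*} [Field K] [LinearOrder K]
    [IsStrictOrderedRing K] {a b c : K} (ha : 0 < a) (h : discrim a b c ≤ 0) (x : K) :
    0 ≤ a * x ^ 2 + b * x + c := by
  have hsq : 4 * a * (a * x ^ 2 + b * x + c) = (2 * a * x + b) ^ 2 - discrim a b c := by
    rw [discrim]
    ring
  refine nonneg_of_mul_nonneg_right ?_ (show 0 < 4 * a by positivity)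
  rw [hsq]
  linarith [sq_nonneg (2 * a * x + b)]

lemma mem_ball_ofReal_self_iff_normSq_lt {r : ℝ} (hr : 0 ≤ r) {w : ℂ} :
    w ∈ ball (r : ℂ) r ↔ normSq w < 2 * r * w.re := by
  have hsq : ‖w - r‖ ^ 2 = normSq w - 2 * r * w.re + r ^ 2 := by
    rw [Complex.sq_norm, normSq_sub, normSq_ofReal, conj_ofReal, re_mul_ofReal]
    ring
  rw [mem_ball_iff_norm, ← sq_lt_sq₀ (norm_nonneg _) hr, hsq]
  constructor <;> intro h <;> linarith

lemma re_sq_eq_two_mul_sq_sub_normSq (v : ℂ) : (v ^ 2).re = 2 * v.re ^ 2 - normSq v := by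
  rw [normSq_apply, sq v, mul_re]
  ring

lemma normSq_one_add_sq (v : ℂ) :
    normSq (1 + v ^ 2) = 1 + 4 * v.re ^ 2 - 2 * normSq v + normSq v ^ 2 := by
  rw [normSq_add, map_one, one_mul, conj_re, re_sq_eq_two_mul_sq_sub_normSq, map_pow]
  ring

lemma normSq_one_add_sq_lt {M : ℝ} (hM : (3 + √5) / 4 ≤ M) {v : ℂ}
    (hv : normSq v < 2 * v.re) : normSq (1 + v ^ 2) < 4 * M * (1 + v ^ 2).re := by
  obtain ⟨h_nonneg, h_sq⟩ : 0 ≤ 4 * M - 3 ∧ 5 ≤ (4 * M - 3) ^ 2 :=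
    Real.sqrt_le_iff.1 (by linarith)
  have hM_one : 1 < M := by nlinarith
  have hdiscrim : discrim (8 * (M - 1)) (-(8 * M - 4)) (4 * M - 1) ≤ 0 := by
    rw [discrim]
    linarith
  have hquadratic := quadratic_nonneg_of_discrim_nonpos (by linarith) hdiscrim v.re
  have hmono : normSq v ^ 2 + (4 * M - 2) * normSq v <
      (2 * v.re) ^ 2 + (4 * M - 2) * (2 * v.re) := by
    have := normSq_nonneg v
    gcongr
    linarith
  rw [normSq_one_add_sq, add_re, one_re, re_sq_eq_two_mul_sq_sub_normSq]
  linarith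

lemma omegaCar_eq_image_ball : omegaCar = (fun v : ℂ ↦ (1 + v ^ 2) / 2) '' ball 1 1 := by
  ext w
  constructor
  · rintro ⟨u, hu, rfl⟩
    exact ⟨1 + u, by simpa [mem_ball_iff_norm] using hu, by ring⟩
  · rintro ⟨v, hv, rfl⟩
    exact ⟨v - 1, mem_ball_iff_norm.1 hv, by ring⟩

theorem omegaCar_subset_ball {M : ℝ} (hM : (3 + √5) / 4 ≤ M) : omegaCar ⊆ ball (M : ℂ) M := by
  have hM_nonneg : 0 ≤ M := le_trans (by positivity) hM
  rw [omegaCar_eq_image_ball, Set.image_subset_iff]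
  intro v hv
  have hv_normSq : normSq v < 2 * v.re := by
    simpa using (mem_ball_ofReal_self_iff_normSq_lt zero_le_one).1 (by simpa using hv)
  have hlt := normSq_one_add_sq_lt hM hv_normSq
  rw [Set.mem_preimage, mem_ball_ofReal_self_iff_normSq_lt hM_nonneg, map_div₀, normSq_ofNat,
    div_ofNat_re]
  linarith

theorem stmt_11 (M : ℝ) (hM : (3 + Real.sqrt 5) / 4 ≤ M) (f : ℂ → ℂ) (hf : SCar f) :
    ∀ z : ℂ, ‖z‖ < 1 → z ≠ 0 → ‖z * deriv f z / f z - (M : ℂ)‖ < M := by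
  intro z hz hz0
  obtain ⟨-, -, -, -, hmem⟩ := hf
  exact mem_ball_iff_norm.1 (omegaCar_subset_ball hM (hmem z hz hz0))
end

section
/- Let f(z) = z + Σ_{n=2}^∞ a_n zⁿ be analytic on 𝔻 and suppose Σ_{n=2}^∞ (2n − 1)|a_n| ≤ 1. Then f(z) ≠ 0 for all z ∈ 𝔻 \ {0} and f ∈ S*_car. -/
open Complex Metric

/-!
The cardioid domain contains the disk `|w - 1| < 1 / 2`: solving `w = 1 + u + u² / 2` means taking
a square root `t = 1 + u` of `1 + 2 (w - 1)`, and if `0 ≤ Re t` then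
`|u| ≤ |t - 1| |t + 1| = 2 |w - 1| < 1`. It therefore suffices that `|z f' - f| < |f| / 2` on the
punctured disk. Writing `f = z + g`, the coefficient condition bounds `|z g' - g| + |g| / 2` by
`|z|² / 2 < |z| / 2`, while `z f' - f = z g' - g` and `|f| ≥ |z| - |g|`.
-/

lemma norm_sub_one_le_norm_sq_sub_one_s12 {t : ℂ} (ht : 0 ≤ t.re) : ‖t - 1‖ ≤ ‖t ^ 2 - 1‖ := by
  have one_le : 1 ≤ ‖t + 1‖ :=
    calc (1 : ℝ) ≤ (t + 1).re := by simpa using ht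
      _ ≤ ‖t + 1‖ := re_le_norm _
  calc ‖t - 1‖ ≤ ‖t + 1‖ * ‖t - 1‖ := le_mul_of_one_le_left (norm_nonneg _) one_le
    _ = ‖t ^ 2 - 1‖ := by rw [← norm_mul]; ring_nf

lemma ne_zero_of_norm_sub_lt_mul_norm {E : Type*} [SeminormedAddGroup E] {x y : E} {β : ℝ}
    (h : ‖x - y‖ < β * ‖y‖) : y ≠ 0 := by
  rintro rfl
  rw [norm_zero, mul_zero] at h
  exact h.not_ge (norm_nonneg _)

lemma norm_div_sub_one_lt {K : Type*} [NormedDivisionRing K] {x y : K} {β : ℝ}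
    (h : ‖x - y‖ < β * ‖y‖) : ‖x / y - 1‖ < β := by
  have hy : y ≠ 0 := ne_zero_of_norm_sub_lt_mul_norm h
  rwa [div_sub_one hy, norm_div, div_lt_iff₀ (norm_pos_iff.mpr hy)]

/-- The sum of the power series `∑ aₙ zⁿ⁺ᵏ`, which starts at order `k`. The index is shifted: `a n`
is the coefficient of `z ^ (n + k)`. -/
noncomputable def tailSeries {𝕜 : Type*} [NormedField 𝕜] (k : ℕ) (a : ℕ → 𝕜) (z : 𝕜) : 𝕜 :=
  ∑' n : ℕ, a n * z ^ (n + k)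

section NormedField

variable {𝕜 : Type*} [NormedField 𝕜] {a : ℕ → 𝕜} {z : 𝕜}

lemma tailSeries_succ_zero (k : ℕ) (a : ℕ → 𝕜) : tailSeries (k + 1) a 0 = 0 := by
  simp [tailSeries]

lemma mul_tailSeries (k : ℕ) (a : ℕ → 𝕜) (z : 𝕜) :
    z * tailSeries k a z = tailSeries (k + 1) a z := by
  rw [tailSeries, tailSeries, ← tsum_mul_left]
  exact tsum_congr fun n => by ring

lemma norm_mul_pow_add_le (hz : ‖z‖ ≤ 1) (k n : ℕ) (c : 𝕜) :
    ‖c * z ^ (n + k)‖ ≤ ‖z‖ ^ k * ‖c‖ := by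
  rw [norm_mul, norm_pow, mul_comm]
  gcongr ?_ * _
  exact pow_le_pow_of_le_one (norm_nonneg z) hz (Nat.le_add_left k n)

lemma norm_tailSeries_le (ha : Summable fun n => ‖a n‖) (hz : ‖z‖ ≤ 1) (k : ℕ) :
    ‖tailSeries k a z‖ ≤ ‖z‖ ^ k * ∑' n, ‖a n‖ :=
  tsum_of_norm_bounded (ha.hasSum.mul_left _) fun n => norm_mul_pow_add_le hz k n (a n)

lemma summable_mul_pow_add [CompleteSpace 𝕜] (ha : Summable fun n => ‖a n‖) (hz : ‖z‖ ≤ 1)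
    (k : ℕ) : Summable fun n => a n * z ^ (n + k) :=
  .of_norm_bounded (ha.mul_left _) fun n => norm_mul_pow_add_le hz k n (a n)

lemma tailSeries_sub [CompleteSpace 𝕜] {b : ℕ → 𝕜} (ha : Summable fun n => ‖a n‖)
    (hb : Summable fun n => ‖b n‖) (hz : ‖z‖ ≤ 1) (k : ℕ) :
    tailSeries k a z - tailSeries k b z = tailSeries k (a - b) z := by
  rw [tailSeries, tailSeries,
    ← (summable_mul_pow_add ha hz k).tsum_sub (summable_mul_pow_add hb hz k)]
  exact tsum_congr fun n => (sub_mul _ _ _).symm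

lemma summable_norm_of_summable_add_mul_norm {k : ℕ}
    (ha : Summable fun n => ((n + k + 1 : ℕ) : ℝ) * ‖a n‖) : Summable fun n => ‖a n‖ := by
  refine ha.of_nonneg_of_le (fun n => norm_nonneg _) fun n => ?_
  exact le_mul_of_one_le_left (norm_nonneg _) (by exact_mod_cast Nat.le_add_left 1 (n + k))

end NormedField

section RCLike

variable {𝕜 : Type*} [RCLike 𝕜] {a : ℕ → 𝕜} {z : 𝕜}

lemma hasDerivAt_tailSeries {k : ℕ} (ha : Summable fun n => ((n + k + 1 : ℕ) : ℝ) * ‖a n‖)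
    (hz : ‖z‖ < 1) :
    HasDerivAt (tailSeries (k + 1) a)
      (tailSeries k (fun n => ((n + k + 1 : ℕ) : 𝕜) * a n) z) z := by
  refine hasDerivAt_tsum_of_isPreconnected (g := fun n z => a n * z ^ (n + (k + 1)))
    (g' := fun n z => ((n + k + 1 : ℕ) : 𝕜) * a n * z ^ (n + k)) (t := ball 0 1) (y₀ := 0)
    ha isOpen_ball (convex_ball 0 1).isPreconnected (fun n y _ => ?_) (fun n y hy => ?_)
    (mem_ball_self one_pos) ?_ (mem_ball_zero_iff.mpr hz)
  · refine ((hasDerivAt_pow (n + (k + 1)) y).const_mul (a n)).congr_deriv ?_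
    rw [← add_assoc, Nat.add_sub_cancel]
    ring
  · have hy1 : ‖y‖ ≤ 1 := (mem_ball_zero_iff.mp hy).le
    calc ‖((n + k + 1 : ℕ) : 𝕜) * a n * y ^ (n + k)‖
        ≤ ‖((n + k + 1 : ℕ) : 𝕜) * a n‖ := by
          rw [norm_mul _ (y ^ _), norm_pow]
          exact mul_le_of_le_one_right (norm_nonneg _) (pow_le_one₀ (norm_nonneg y) hy1)
      _ = ((n + k + 1 : ℕ) : ℝ) * ‖a n‖ := by rw [norm_mul, RCLike.norm_natCast]
  · exact summable_mul_pow_add (summable_norm_of_summable_add_mul_norm ha)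
      (norm_zero.trans_le zero_le_one) (k + 1)

lemma mul_deriv_tailSeries_sub_self {k : ℕ}
    (ha : Summable fun n => ((n + k + 1 : ℕ) : ℝ) * ‖a n‖) (hz : ‖z‖ < 1) :
    z * deriv (tailSeries (k + 1) a) z - tailSeries (k + 1) a z =
      tailSeries (k + 1) (fun n => ((n + k : ℕ) : 𝕜) * a n) z := by
  have ha' : Summable fun n => ‖((n + k + 1 : ℕ) : 𝕜) * a n‖ := by
    simpa only [norm_mul, RCLike.norm_natCast] using ha
  rw [(hasDerivAt_tailSeries ha hz).deriv, mul_tailSeries,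
    tailSeries_sub ha' (summable_norm_of_summable_add_mul_norm ha) hz.le]
  congr 1
  ext n
  simp only [Pi.sub_apply]
  push_cast
  ring

lemma norm_mul_deriv_tailSeries_sub_self_add_le {k : ℕ} {β : ℝ} (hβ : 0 ≤ β)
    (ha : Summable fun n => ((n + k + 1 : ℕ) : ℝ) * ‖a n‖) (hz : ‖z‖ < 1) :
    ‖z * deriv (tailSeries (k + 1) a) z - tailSeries (k + 1) a z‖
        + β * ‖tailSeries (k + 1) a z‖ ≤
      ‖z‖ ^ (k + 1) * ∑' n, ((n + k : ℕ) + β) * ‖a n‖ := by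
  have ha_norm : Summable fun n => ‖a n‖ := summable_norm_of_summable_add_mul_norm ha
  have ha_mul : Summable fun n => ((n + k : ℕ) : ℝ) * ‖a n‖ :=
    (ha.sub ha_norm).congr fun n => by push_cast; ring
  have hg := norm_tailSeries_le ha_norm hz.le (k + 1)
  have hdiff : ‖tailSeries (k + 1) (fun n => ((n + k : ℕ) : 𝕜) * a n) z‖ ≤
      ‖z‖ ^ (k + 1) * ∑' n, ((n + k : ℕ) : ℝ) * ‖a n‖ := by
    have hnorm (n : ℕ) : ‖((n + k : ℕ) : 𝕜) * a n‖ = ((n + k : ℕ) : ℝ) * ‖a n‖ := by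
      rw [norm_mul, RCLike.norm_natCast]
    simpa only [hnorm] using
      norm_tailSeries_le (ha_mul.congr fun n => (hnorm n).symm) hz.le (k + 1)
  rw [mul_deriv_tailSeries_sub_self ha hz]
  calc _ ≤ ‖z‖ ^ (k + 1) * ∑' n, ((n + k : ℕ) : ℝ) * ‖a n‖
          + β * (‖z‖ ^ (k + 1) * ∑' n, ‖a n‖) := by gcongr
    _ = ‖z‖ ^ (k + 1) * (∑' n, ((n + k : ℕ) : ℝ) * ‖a n‖ + ∑' n, β * ‖a n‖) := by
      rw [tsum_mul_left]; ring
    _ = ‖z‖ ^ (k + 1) * ∑' n, ((n + k : ℕ) + β) * ‖a n‖ := by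
      rw [← ha_mul.tsum_add (ha_norm.mul_left β)]
      simp only [add_mul]

end RCLike

section CoefficientCriterion

variable {𝕜 : Type*} [RCLike 𝕜] {f : 𝕜 → 𝕜} {a : ℕ → 𝕜} {z : 𝕜} {β : ℝ}

lemma hasDerivAt_of_eqOn_add_tailSeries
    (hf : Set.EqOn f (fun z => z + tailSeries 2 a z) (ball 0 1))
    (ha : Summable fun n => ((n + 2 : ℕ) : ℝ) * ‖a n‖) (hz : ‖z‖ < 1) :
    HasDerivAt f (1 + tailSeries 1 (fun n => ((n + 2 : ℕ) : 𝕜) * a n) z) z :=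
  ((hasDerivAt_id z).add (hasDerivAt_tailSeries ha hz)).congr_of_eventuallyEq
    (hf.eventuallyEq_of_mem (isOpen_ball.mem_nhds (mem_ball_zero_iff.mpr hz)))

-- For `β = 1 - α` this is Silverman's coefficient criterion for starlikeness of order `α`.
lemma norm_mul_deriv_sub_self_lt (hβ : 0 < β)
    (hf : Set.EqOn f (fun z => z + tailSeries 2 a z) (ball 0 1))
    (ha : Summable fun n => ((n + 2 : ℕ) : ℝ) * ‖a n‖)
    (hle : ∑' n, ((n + 1 : ℕ) + β) * ‖a n‖ ≤ β) (hz : ‖z‖ < 1) (hz0 : z ≠ 0) :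
    ‖z * deriv f z - f z‖ < β * ‖f z‖ := by
  set g := tailSeries 2 a
  have hfz : f z = z + g z := hf (mem_ball_zero_iff.mpr hz)
  have hsub : z * deriv f z - f z = z * deriv g z - g z := by
    rw [(hasDerivAt_of_eqOn_add_tailSeries hf ha hz).deriv, hfz,
      (hasDerivAt_tailSeries ha hz).deriv]
    ring
  have hg_le : ‖z * deriv g z - g z‖ + β * ‖g z‖ ≤ ‖z‖ ^ 2 * β :=
    (norm_mul_deriv_tailSeries_sub_self_add_le hβ.le ha hz).trans (by gcongr)
  have hz_sq : ‖z‖ ^ 2 * β < ‖z‖ * β := by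
    gcongr
    exact pow_lt_self_of_lt_one₀ (norm_pos_iff.mpr hz0) hz one_lt_two
  have hz_le : β * ‖z‖ ≤ β * (‖f z‖ + ‖g z‖) := by
    gcongr
    simpa only [hfz, add_sub_cancel_right] using norm_sub_le (f z) (g z)
  rw [hsub]
  linarith

end CoefficientCriterion

theorem stmt_12 (f : ℂ → ℂ) (a : ℕ → ℂ)
    (hfd : DifferentiableOn ℂ f (Metric.ball (0 : ℂ) 1))
    (hfa : ∀ z : ℂ, ‖z‖ < 1 → f z = z + ∑' n : ℕ, a n * z ^ (n + 2))
    (hsum : Summable fun n : ℕ => (2 * ((n : ℝ) + 2) - 1) * ‖a n‖)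
    (hle : ∑' n : ℕ, (2 * ((n : ℝ) + 2) - 1) * ‖a n‖ ≤ 1) :
    (∀ z : ℂ, ‖z‖ < 1 → z ≠ 0 → f z ≠ 0) ∧ SCar f := by
  have hf : Set.EqOn f (fun z => z + tailSeries 2 a z) (ball 0 1) :=
    fun z hz => hfa z (mem_ball_zero_iff.mp hz)
  have ha : Summable fun n => ((n + 2 : ℕ) : ℝ) * ‖a n‖ := by
    refine hsum.of_nonneg_of_le (fun n => by positivity) fun n => ?_
    gcongr
    push_cast
    linarith [(n.cast_nonneg : (0 : ℝ) ≤ n)]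
  have hle_half : ∑' n, ((n + 1 : ℕ) + (1 / 2 : ℝ)) * ‖a n‖ ≤ 1 / 2 := by
    have hcoeff (n : ℕ) : (2 * ((n : ℝ) + 2) - 1) * ‖a n‖ =
        2 * (((n + 1 : ℕ) + (1 / 2 : ℝ)) * ‖a n‖) := by push_cast; ring
    simp only [hcoeff, tsum_mul_left] at hle
    linarith
  have hlt (z : ℂ) (hz : ‖z‖ < 1) (hz0 : z ≠ 0) : ‖z * deriv f z - f z‖ < 1 / 2 * ‖f z‖ :=
    norm_mul_deriv_sub_self_lt one_half_pos hf ha hle_half hz hz0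
  have hne (z : ℂ) (hz : ‖z‖ < 1) (hz0 : z ≠ 0) : f z ≠ 0 :=
    ne_zero_of_norm_sub_lt_mul_norm (hlt z hz hz0)
  refine ⟨hne, hfd, ?_, ?_, hne, fun z hz hz0 => ball_one_half_subset_omegaCar ?_⟩
  · rw [hfa 0 (by simp), ← tailSeries, tailSeries_succ_zero, add_zero]
  · rw [(hasDerivAt_of_eqOn_add_tailSeries hf ha (by simp)).deriv, tailSeries_succ_zero, add_zero]
  · exact mem_ball_iff_norm.mpr (norm_div_sub_one_lt (hlt z hz hz0))
end
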